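/- Let ε_1, …, ε_n be independent Rademacher random variables and let T_n = {x ∈ ℝ^n : x_1 ≥ x_2 ≥ … ≥ x_n ≥ 0}. There exists a finite subset A_n of T_n such that for every x ∈ ℝ₊^n, E| Σ_{j=1}^n x_j ε_j | = max_{a ∈ A_n, σ ∈ S_n} Σ_{j=1}^n a_j x_{σ(j)}, where the maximum is over all a ∈ A_n and all permutations σ of {1,…,n}. -/

import Mathlib

open Finset

/-- The cone `T_n = {x ∈ ℝ^n : x_1 ≥ x_2 ≥ … ≥ x_n ≥ 0}` of nonincreasing
nonnegative sequences. -/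
def Tcone (n : ℕ) : Set (Fin n → ℝ) :=
  {x | (∀ i j : Fin n, i ≤ j → x j ≤ x i) ∧ ∀ i, 0 ≤ x i}

/-!
Since `|t| = max (t, -t)`, the function `x ↦ E|∑ x_j ε_j|` is the maximum of the linear forms
`x ↦ ∑ a_j x_j`, where `a_j = E[η(ε) ε_j]` and `η` runs over the finitely many functions
`{-1,1}^n → {-1,1}`. The set of these vectors `a` is invariant under permutations and sign changes
of the coordinates. For `x ≥ 0`, replacing a maximizer `a` by `|a|` does not decrease `∑ a_j x_j`,
and sorting `|a|` moves it into `T_n` at the cost of applying the same permutation to `x`.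
-/

open scoped BigOperators

theorem isGreatest_dotProduct_comp_perm_inter_Tcone {n : ℕ} {K : Set (Fin n → ℝ)}
    (hperm : ∀ a ∈ K, ∀ σ : Equiv.Perm (Fin n), a ∘ σ ∈ K) (habs : ∀ a ∈ K, |a| ∈ K)
    {x : Fin n → ℝ} (hx : 0 ≤ x) {M : ℝ} (hM : IsGreatest ((· ⬝ᵥ x) '' K) M) :
    IsGreatest ((fun p : (Fin n → ℝ) × Equiv.Perm (Fin n) => p.1 ⬝ᵥ (x ∘ p.2)) ''
      ((K ∩ Tcone n) ×ˢ Set.univ)) M := by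
  obtain ⟨⟨a, ha, rfl⟩, hub⟩ := hM
  refine ⟨?_, ?_⟩
  · let σ := Tuple.sort (OrderDual.toDual ∘ |a|)
    have hanti : Antitone (|a| ∘ σ) := Tuple.monotone_sort (OrderDual.toDual ∘ |a|)
    have hle : a ⬝ᵥ x ≤ |a| ⬝ᵥ x := dotProduct_le_dotProduct_of_nonneg_right (le_abs_self a) hx
    have hge : |a| ⬝ᵥ x ≤ a ⬝ᵥ x := hub (Set.mem_image_of_mem _ (habs a ha))
    refine ⟨(|a| ∘ σ, σ), ⟨⟨hperm _ (habs a ha) σ, hanti, fun j => abs_nonneg (a (σ j))⟩,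
      Set.mem_univ σ⟩, ?_⟩
    exact (comp_equiv_dotProduct_comp_equiv |a| x σ).trans (hge.antisymm hle)
  · rintro _ ⟨⟨b, σ⟩, ⟨⟨hb, -⟩, -⟩, rfl⟩
    calc b ⬝ᵥ (x ∘ σ) = (b ∘ σ.symm) ⬝ᵥ x := (comp_equiv_symm_dotProduct b x σ).symm
      _ ≤ a ⬝ᵥ x := hub (Set.mem_image_of_mem _ (hperm b hb σ.symm))

/-- The sign `±1` encoded by a Boolean, so that uniformly distributed Booleans become Rademacher
variables. -/
def boolSign (b : Bool) : ℝ := if b then 1 else -1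

theorem boolSign_beq (b c : Bool) : boolSign (b == c) = boolSign b * boolSign c := by
  cases b <;> cases c <;> simp [boolSign]

theorem boolSign_mul_le_abs (b : Bool) (t : ℝ) : boolSign b * t ≤ |t| := by
  cases b
  · simpa [boolSign] using neg_le_abs t
  · simpa [boolSign] using le_abs_self t

theorem boolSign_decide_nonneg_mul_self (t : ℝ) : boolSign (decide (0 ≤ t)) * t = |t| := by
  rcases le_or_gt 0 t with ht | ht
  · simp [boolSign, ht, abs_of_nonneg]
  · simp [boolSign, ht.not_ge, abs_of_neg ht]

section SignCorrelation

variable {ι : Type*} [Fintype ι] [DecidableEq ι]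

/-- The vector `(E[η(ε) ε_j])_j` of correlations of a `±1`-valued function `η` of the Rademacher
variables with these variables; signs are encoded by Booleans as in `boolSign`. -/
noncomputable def signCorrelation (η : (ι → Bool) → Bool) (j : ι) : ℝ :=
  𝔼 s, boolSign (η s) * boolSign (s j)

theorem signCorrelation_dotProduct (η : (ι → Bool) → Bool) (x : ι → ℝ) :
    signCorrelation η ⬝ᵥ x = 𝔼 s, boolSign (η s) * ∑ j, x j * boolSign (s j) := by
  simp only [dotProduct, signCorrelation, expect_mul, mul_sum]
  rw [expect_sum_comm]
  exact sum_congr rfl fun j _ => expect_congr rfl fun s _ => by ring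

theorem isGreatest_signCorrelation_dotProduct (x : ι → ℝ) :
    IsGreatest ((· ⬝ᵥ x) '' Set.range (signCorrelation (ι := ι)))
      (𝔼 s : ι → Bool, |∑ j, x j * boolSign (s j)|) := by
  refine ⟨⟨_, ⟨fun s => decide (0 ≤ ∑ j, x j * boolSign (s j)), rfl⟩, ?_⟩, ?_⟩
  · simp only [signCorrelation_dotProduct, boolSign_decide_nonneg_mul_self]
  · rintro _ ⟨_, ⟨η, rfl⟩, rfl⟩
    simp only [signCorrelation_dotProduct]
    exact expect_le_expect fun s _ => boolSign_mul_le_abs _ _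

theorem signCorrelation_comp_perm (η : (ι → Bool) → Bool) (σ : Equiv.Perm ι) :
    signCorrelation η ∘ σ = signCorrelation fun s => η (s ∘ σ.symm) := by
  ext j
  refine Fintype.expect_equiv (σ.symm.arrowCongr (Equiv.refl Bool)) _ _ fun s => ?_
  simp [Equiv.arrowCongr, Function.comp_def]

theorem signCorrelation_mul_boolSign (η : (ι → Bool) → Bool) (u : ι → Bool) :
    (fun j => boolSign (u j) * signCorrelation η j) =
      signCorrelation fun s => η fun j => s j == u j := by
  have hinv : Function.Involutive fun (s : ι → Bool) j => s j == u j :=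
    fun s => funext fun j => Bool.beq_self_right (s j) (u j)
  ext j
  simp only [signCorrelation, mul_expect]
  refine Fintype.expect_equiv hinv.toPerm _ _ fun s => ?_
  simp only [hinv.coe_toPerm, Bool.beq_self_right, boolSign_beq]
  ring

theorem abs_signCorrelation (η : (ι → Bool) → Bool) :
    |signCorrelation η| =
      signCorrelation fun s => η fun j => s j == decide (0 ≤ signCorrelation η j) := by
  rw [← signCorrelation_mul_boolSign]
  ext j
  rw [Pi.abs_apply, boolSign_decide_nonneg_mul_self]

end SignCorrelation

/-- For independent Rademacher signs `ε_1, …, ε_n` (modelled by the uniform measure on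
`{-1,1}^n`, encoded via `Fin n → Bool`), there is a finite subset `A_n ⊆ T_n` such that
for every `x ∈ ℝ₊^n`,
`E|Σ_j x_j ε_j| = max_{a ∈ A_n, σ ∈ S_n} Σ_j a_j x_{σ(j)}`. -/
theorem rademacher_L1_eq_max_of_linear_perm (n : ℕ) :
    ∃ A : Finset (Fin n → ℝ), (∀ a ∈ A, a ∈ Tcone n) ∧
      ∀ x : Fin n → ℝ, (∀ j, 0 ≤ x j) →
        IsGreatest
          ((fun pr : (Fin n → ℝ) × Equiv.Perm (Fin n) =>
              ∑ j, pr.1 j * x (pr.2 j)) ''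
            (↑A ×ˢ (Set.univ : Set (Equiv.Perm (Fin n)))))
          ((2 ^ n : ℝ)⁻¹ * ∑ s : Fin n → Bool,
            |∑ j, x j * (if s j then (1 : ℝ) else -1)|) := by
  have hfin : (Set.range (signCorrelation (ι := Fin n)) ∩ Tcone n).Finite :=
    (Set.finite_range _).inter_of_left _
  refine ⟨hfin.toFinset, fun a ha => (hfin.mem_toFinset.mp ha).2, fun x hx => ?_⟩
  have hmean : (2 ^ n : ℝ)⁻¹ * ∑ s : Fin n → Bool, |∑ j, x j * (if s j then (1 : ℝ) else -1)| =
      𝔼 s : Fin n → Bool, |∑ j, x j * boolSign (s j)| := by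
    simp [Fintype.expect_eq_sum_div_card, inv_mul_eq_div, boolSign]
  rw [hfin.coe_toFinset, hmean]
  refine isGreatest_dotProduct_comp_perm_inter_Tcone ?_ ?_ hx
    (isGreatest_signCorrelation_dotProduct x)
  · rintro _ ⟨η, rfl⟩ σ
    exact ⟨_, (signCorrelation_comp_perm η σ).symm⟩
  · rintro _ ⟨η, rfl⟩
    exact ⟨_, (abs_signCorrelation η).symm⟩
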